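/- The supremum, over all finite loopless directed graphs G with at least one arc, of the ratio χ*(G)/ψ_d*(G) equals e, the base of the natural logarithm: for every such G one has χ*(G) < e·ψ_d*(G), and for every ε > 0 there exists such a G with χ*(G) > (e−ε)·ψ_d*(G). -/

import Mathlib

open Classical

/-- The underlying undirected simple graph of a digraph given by an arc relation `D`. -/
def underlying {V : Type*} (D : V → V → Prop) : SimpleGraph V := SimpleGraph.fromRel D

/-- `A` is an independent set of the simple graph `G`. -/
def IsIndepF {V : Type*} (G : SimpleGraph V) (A : Finset V) : Prop :=
  ∀ u ∈ A, ∀ v ∈ A, ¬ G.Adj u v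

/-- A fractional coloring of `G`: nonnegative weights on the independent sets of `G` such
that the sets containing any fixed vertex have total weight at least `1`. -/
structure FracColoring {V : Type*} [Fintype V] (G : SimpleGraph V) where
  x : Finset V → ℝ
  nonneg : ∀ A, 0 ≤ x A
  supp : ∀ A, x A ≠ 0 → IsIndepF G A
  cover : ∀ v : V, 1 ≤ ∑ A : Finset V, if v ∈ A then x A else 0

/-- The total weight of a fractional coloring. -/
noncomputable def totalWeight {V : Type*} [Fintype V] {G : SimpleGraph V}
    (f : FracColoring G) : ℝ :=
  ∑ A : Finset V, f.x A

/-- The fractional chromatic number `χ*(G)`: the minimum total weight of a fractional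
coloring of `G`. -/
noncomputable def fracChrom {V : Type*} [Fintype V] (G : SimpleGraph V) : ℝ :=
  sInf {w : ℝ | ∃ f : FracColoring G, w = totalWeight f}

/-- The local weight of a fractional coloring of a digraph `D`:
`1` plus the maximum over vertices `v` of the total weight of the independent sets meeting
the out-neighborhood of `v`. -/
noncomputable def localWeight {V : Type*} [Fintype V] (D : V → V → Prop)
    (f : FracColoring (underlying D)) : ℝ :=
  1 + ⨆ v : V, ∑ A : Finset V, if ∃ u ∈ A, D v u then f.x A else 0

/-- The fractional directed local chromatic number `ψ_d*(D)`: the minimum local weight of a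
fractional coloring of `D`. -/
noncomputable def fracDirLocal {V : Type*} [Fintype V] (D : V → V → Prop) : ℝ :=
  sInf {w : ℝ | ∃ f : FracColoring (underlying D), w = localWeight D f}

/-!
Upper bound. Given a fractional coloring `x` of `D` of local weight `L` and `s > 0`, choose a
random family of color classes, including each class `A` independently with probability
`1 - exp (-s * x A)`. Keep a vertex `v` when a class containing `v` is chosen and every chosen class
meeting `N₊(v)` contains `v`. The kept vertices are independent, and each vertex is kept with
probability at least `(1 - exp (-s)) * exp (-s * (L - 1))`, so `χ* * (exp s - 1) ≤ exp (s * L)`.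
Passing to the infimum over `x` and taking `s = 1 / ψ_d*` gives
`χ* ≤ e / (exp (1 / ψ_d*) - 1) < e * ψ_d*`.

Lower bound. In the universal digraph a vertex is a color `x` out of `n` together with `k` colors
`yᵢ ≠ x`, with arcs towards the vertices colored by some `yᵢ`; coloring by `x` shows `ψ_d* ≤ k + 1`.
An independent set using `s` colors has at most `s * (n - s) ^ k ≤ n ^ (k + 1) / (e * k)` elements
out of `n * (n - 1) ^ k`, so `χ* ≥ e * k * (1 - 1 / n) ^ k`, and `n = k * (k + 1)` suffices.
-/

open Finset Filter Topology

lemma sum_ite_sum_fiber {ι α : Type*} [Fintype ι] [Fintype α] [DecidableEq α] (S : ι → α)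
    (w : ι → ℝ) (p : α → Prop) [DecidablePred p] :
    (∑ a, if p a then ∑ i with S i = a, w i else 0) = ∑ i, if p (S i) then w i else 0 := by
  simp_rw [← sum_filter, sum_fiberwise_eq_sum_filter, mem_filter_univ]

namespace FracColoring

variable {V W : Type*} [Fintype V] [Fintype W] {G : SimpleGraph V}

/-- The total weight that the fractional coloring `f` gives to the sets satisfying `p`, which is
the common shape of the sums in `FracColoring.cover`, `totalWeight` and `localWeight`. -/
noncomputable def weight (f : FracColoring G) (p : Finset V → Prop) [DecidablePred p] : ℝ :=
  ∑ A, if p A then f.x A else 0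

lemma weight_true (f : FracColoring G) : f.weight (fun _ ↦ True) = totalWeight f := by
  simp only [weight, if_true, totalWeight]

lemma weight_nonneg (f : FracColoring G) (p : Finset V → Prop) [DecidablePred p] : 0 ≤ f.weight p :=
  sum_nonneg fun A _ ↦ ite_nonneg (f.nonneg A) le_rfl

lemma weight_mono (f : FracColoring G) {p q : Finset V → Prop} [DecidablePred p] [DecidablePred q]
    (h : ∀ A, p A → q A) : f.weight p ≤ f.weight q := by
  simp only [weight, ← sum_filter]
  exact sum_le_sum_of_subset_of_nonneg (monotone_filter_right _ fun A _ ↦ h A)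
    fun A _ _ ↦ f.nonneg A

lemma one_add_weight_le_localWeight {D : V → V → Prop} (f : FracColoring (underlying D)) (v : V) :
    1 + f.weight (fun A ↦ ∃ u ∈ A, D v u) ≤ localWeight D f :=
  add_le_add_right (le_ciSup (f := fun v ↦ f.weight fun A ↦ ∃ u ∈ A, D v u)
    (Set.finite_range _).bddAbove v) 1

lemma one_le_localWeight {D : V → V → Prop} (f : FracColoring (underlying D)) :
    1 ≤ localWeight D f :=
  le_add_of_nonneg_right <| Real.iSup_nonneg fun _ ↦ f.weight_nonneg _

lemma localWeight_le {D : V → V → Prop} (f : FracColoring (underlying D)) {a : ℝ} (ha : 1 ≤ a)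
    (h : ∀ v, 1 + f.weight (fun A ↦ ∃ u ∈ A, D v u) ≤ a) : localWeight D f ≤ a :=
  le_sub_iff_add_le'.1 <|
    Real.iSup_le (fun v ↦ le_sub_iff_add_le'.2 (h v)) (sub_nonneg.2 ha)

/-- The fractional coloring in which `A` receives the total weight `w i` of the indices `i` with
`S i = A`. Indices of zero weight are allowed to name sets that are not independent. -/
noncomputable def ofFamily {ι : Type*} [Fintype ι] (S : ι → Finset V) (w : ι → ℝ)
    (nonneg : ∀ i, 0 ≤ w i) (supp : ∀ i, w i ≠ 0 → IsIndepF G (S i))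
    (cover : ∀ v, 1 ≤ ∑ i, if v ∈ S i then w i else 0) : FracColoring G where
  x A := ∑ i with S i = A, w i
  nonneg A := sum_nonneg fun i _ ↦ nonneg i
  supp A hA := by
    obtain ⟨i, hi, hwi⟩ := exists_ne_zero_of_sum_ne_zero hA
    exact (mem_filter.1 hi).2 ▸ supp i hwi
  cover v := (cover v).trans_eq (sum_ite_sum_fiber S w (v ∈ ·)).symm

lemma weight_ofFamily {ι : Type*} [Fintype ι] {S : ι → Finset V} {w : ι → ℝ}
    (nonneg : ∀ i, 0 ≤ w i) (supp : ∀ i, w i ≠ 0 → IsIndepF G (S i))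
    (cover : ∀ v, 1 ≤ ∑ i, if v ∈ S i then w i else 0) (p : Finset V → Prop)
    [DecidablePred p] :
    (ofFamily S w nonneg supp cover).weight p = ∑ i, if p (S i) then w i else 0 :=
  sum_ite_sum_fiber S w p

/-- The fractional coloring giving weight `1` to each color class of a proper vertex coloring. -/
noncomputable def ofColoring {K : Type*} [Fintype K] (c : G.Coloring K) : FracColoring G :=
  ofFamily (fun k ↦ {v | c v = k}) 1 (fun _ ↦ zero_le_one)
    (fun k _ u hu v hv huv ↦ c.valid huv (by simp_all))
    (fun v ↦ by simp)

lemma weight_ofColoring {K : Type*} [Fintype K] (c : G.Coloring K) (p : V → Prop) :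
    (ofColoring c).weight (fun A ↦ ∃ u ∈ A, p u) = #{k | ∃ u, p u ∧ c u = k} := by
  refine (weight_ofFamily ..).trans ?_
  simp [and_comm]

instance : Nonempty (FracColoring G) := ⟨ofColoring G.selfColoring⟩

/-- The pullback of a fractional coloring along a graph homomorphism, moving the weight of each
independent set to its preimage. -/
noncomputable def comap {H : SimpleGraph W} (φ : G →g H) (f : FracColoring H) : FracColoring G :=
  ofFamily (fun B ↦ {v | φ v ∈ B}) f.x f.nonneg
    (fun B hB u hu v hv huv ↦ f.supp B hB _ (by simpa using hu) _ (by simpa using hv)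
      (φ.map_adj huv))
    (fun v ↦ by simpa using f.cover (φ v))

lemma weight_comap {H : SimpleGraph W} (φ : G →g H) (f : FracColoring H) (p : Finset V → Prop)
    [DecidablePred p] : (f.comap φ).weight p = f.weight fun B ↦ p {v | φ v ∈ B} :=
  weight_ofFamily ..

end FracColoring

section Parameters

variable {V W : Type*} [Fintype V] [Fintype W] {G : SimpleGraph V} {H : SimpleGraph W}
  {D : V → V → Prop} {E : W → W → Prop}

lemma fracChrom_le_totalWeight (f : FracColoring G) : fracChrom G ≤ totalWeight f :=
  csInf_le ⟨0, by rintro _ ⟨g, rfl⟩; exact g.weight_true ▸ g.weight_nonneg _⟩ ⟨f, rfl⟩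

lemma le_fracChrom {a : ℝ} (h : ∀ f : FracColoring G, a ≤ totalWeight f) : a ≤ fracChrom G :=
  le_csInf ⟨_, Classical.arbitrary _, rfl⟩ (by rintro _ ⟨f, rfl⟩; exact h f)

lemma fracDirLocal_le_localWeight (f : FracColoring (underlying D)) :
    fracDirLocal D ≤ localWeight D f :=
  csInf_le ⟨1, by rintro _ ⟨g, rfl⟩; exact g.one_le_localWeight⟩ ⟨f, rfl⟩

lemma le_fracDirLocal {a : ℝ} (h : ∀ f : FracColoring (underlying D), a ≤ localWeight D f) :
    a ≤ fracDirLocal D :=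
  le_csInf ⟨_, Classical.arbitrary _, rfl⟩ (by rintro _ ⟨f, rfl⟩; exact h f)

lemma one_le_fracDirLocal : 1 ≤ fracDirLocal D :=
  le_fracDirLocal fun f ↦ f.one_le_localWeight

lemma fracDirLocal_le_of_coloring {K : Type*} [Fintype K] (c : (underlying D).Coloring K) {d : ℕ}
    (h : ∀ v, #{k | ∃ u, D v u ∧ c u = k} ≤ d) : fracDirLocal D ≤ 1 + d :=
  (fracDirLocal_le_localWeight (.ofColoring c)).trans <|
    FracColoring.localWeight_le _ (le_add_of_nonneg_right d.cast_nonneg) fun v ↦ by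
      rw [FracColoring.weight_ofColoring]
      exact_mod_cast Nat.add_le_add_left (h v) 1

lemma mul_fracChrom_le_sum {ι : Type*} [Fintype ι] {S : ι → Finset V} {w : ι → ℝ}
    (nonneg : ∀ i, 0 ≤ w i) (supp : ∀ i, w i ≠ 0 → IsIndepF G (S i)) {p : ℝ} (hp : 0 < p)
    (cover : ∀ v, p ≤ ∑ i, if v ∈ S i then w i else 0) : p * fracChrom G ≤ ∑ i, w i := by
  let f : FracColoring G := .ofFamily S (fun i ↦ w i / p) (fun i ↦ div_nonneg (nonneg i) hp.le)
    (fun i hi ↦ supp i (div_ne_zero_iff.1 hi).1)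
    (fun v ↦ ((one_le_div hp).2 (cover v)).trans_eq (by simp only [sum_div, ite_div, zero_div]))
  rw [← le_div_iff₀' hp]
  calc fracChrom G ≤ totalWeight f := fracChrom_le_totalWeight f
    _ = (∑ i, w i) / p := by
      simp only [← f.weight_true, f, FracColoring.weight_ofFamily, if_true, sum_div]

-- Weak linear programming duality: `y` is a fractional clique.
lemma sum_le_fracChrom {y : V → ℝ} (hy : ∀ v, 0 ≤ y v)
    (h : ∀ A, IsIndepF G A → ∑ v ∈ A, y v ≤ 1) : ∑ v, y v ≤ fracChrom G := by
  refine le_fracChrom fun f ↦ ?_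
  calc ∑ v, y v
      ≤ ∑ v, y v * ∑ A, (if v ∈ A then f.x A else 0) := by
        gcongr with v
        exact le_mul_of_one_le_right (hy v) (f.cover v)
    _ = ∑ A, f.x A * ∑ v ∈ A, y v := by
        simp_rw [mul_sum]
        rw [sum_comm]
        simp [mul_comm]
    _ ≤ totalWeight f := by
        refine sum_le_sum fun A _ ↦ ?_
        obtain hA | hA := eq_or_ne (f.x A) 0
        · simp [hA]
        · exact mul_le_of_le_one_right (f.nonneg A) (h A (f.supp A hA))

lemma fracChrom_le_of_hom (φ : G →g H) : fracChrom G ≤ fracChrom H :=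
  le_fracChrom fun f ↦ (fracChrom_le_totalWeight (f.comap φ)).trans_eq <| by
    rw [← FracColoring.weight_true, FracColoring.weight_comap, FracColoring.weight_true]

lemma fracChrom_congr (e : G ≃g H) : fracChrom G = fracChrom H :=
  (fracChrom_le_of_hom e.toHom).antisymm (fracChrom_le_of_hom e.symm.toHom)

/-- The isomorphism of underlying graphs induced by an isomorphism of digraphs. -/
def underlyingIso (e : D ≃r E) : underlying D ≃g underlying E where
  toEquiv := e.toEquiv
  map_rel_iff' := by simp [underlying, e.map_rel_iff]

lemma fracDirLocal_le_of_relIso (e : D ≃r E) : fracDirLocal D ≤ fracDirLocal E :=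
  le_fracDirLocal fun f ↦ by
    refine (fracDirLocal_le_localWeight (f.comap (underlyingIso e).toHom)).trans <|
      FracColoring.localWeight_le _ f.one_le_localWeight fun v ↦ ?_
    rw [FracColoring.weight_comap]
    refine le_trans ?_ (f.one_add_weight_le_localWeight (e v))
    gcongr
    refine f.weight_mono fun B ⟨u, hu, hvu⟩ ↦ ⟨e u, ?_, e.map_rel_iff.2 hvu⟩
    exact (mem_filter_univ u).1 hu

lemma fracDirLocal_congr (e : D ≃r E) : fracDirLocal D = fracDirLocal E :=
  (fracDirLocal_le_of_relIso e).antisymm (fracDirLocal_le_of_relIso e.symm)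

end Parameters

section UpperBound

/-- The probability that a random subset equals `C`, when each `i` is left out independently with
probability `q i`. -/
noncomputable def randomSubsetProb {ι : Type*} [Fintype ι] [DecidableEq ι] (q : ι → ℝ)
    (C : Finset ι) : ℝ :=
  (∏ i ∈ C, (1 - q i)) * ∏ i ∈ Cᶜ, q i

variable {ι : Type*} [Fintype ι] [DecidableEq ι]

lemma sum_randomSubsetProb_disjoint (q : ι → ℝ) (F : Finset ι) :
    (∑ C, if Disjoint C F then randomSubsetProb q C else 0) = ∏ i ∈ F, q i := by
  calc (∑ C, if Disjoint C F then randomSubsetProb q C else 0)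
      = ∑ C, (∏ i ∈ C, if i ∈ F then 0 else 1 - q i) * ∏ i ∈ Cᶜ, q i := by
        refine sum_congr rfl fun C _ ↦ ?_
        by_cases hCF : Disjoint C F
        · rw [if_pos hCF, randomSubsetProb]
          congr 1
          exact prod_congr rfl fun i hi ↦ (if_neg (disjoint_left.1 hCF hi)).symm
        · obtain ⟨i, hiC, hiF⟩ := not_disjoint_iff.1 hCF
          rw [if_neg hCF, prod_eq_zero hiC (by rw [if_pos hiF]), zero_mul]
    _ = ∏ i, ((if i ∈ F then 0 else 1 - q i) + q i) := (Fintype.prod_add _ _).symm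
    _ = ∏ i, if i ∈ F then q i else 1 := prod_congr rfl fun i _ ↦ by split_ifs <;> ring
    _ = ∏ i ∈ F, q i := by simp

lemma sum_randomSubsetProb (q : ι → ℝ) : ∑ C, randomSubsetProb q C = 1 := by
  simpa using sum_randomSubsetProb_disjoint q ∅

lemma sum_randomSubsetProb_not_disjoint_and_disjoint (q : ι → ℝ) {E F : Finset ι}
    (hEF : Disjoint E F) :
    (∑ C, if ¬ Disjoint C E ∧ Disjoint C F then randomSubsetProb q C else 0) =
      (1 - ∏ i ∈ E, q i) * ∏ i ∈ F, q i := by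
  have split (C : Finset ι) :
      (if ¬ Disjoint C E ∧ Disjoint C F then randomSubsetProb q C else 0) =
        (if Disjoint C F then randomSubsetProb q C else 0) -
          if Disjoint C (E ∪ F) then randomSubsetProb q C else 0 := by
    by_cases hE : Disjoint C E <;> by_cases hF : Disjoint C F <;>
      simp [hE, hF, disjoint_union_right]
  simp only [split, sum_sub_distrib, sum_randomSubsetProb_disjoint, prod_union hEF]
  ring

variable {V : Type*} [Fintype V] {D : V → V → Prop}

/-- The vertices selected by a family `C` of color classes: those `v` that lie in some class of `C`
and belong to every class of `C` that meets the out-neighborhood of `v`. -/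
noncomputable def selectedSet (D : V → V → Prop) (C : Finset (Finset V)) : Finset V :=
  {v | (∃ A ∈ C, v ∈ A) ∧ ∀ A ∈ C, v ∉ A → ∀ u ∈ A, ¬ D v u}

lemma isIndepF_selectedSet {C : Finset (Finset V)} (hC : ∀ A ∈ C, IsIndepF (underlying D) A) :
    IsIndepF (underlying D) (selectedSet D C) := by
  have no_arc {u v : V} (hu : u ∈ selectedSet D C) (hv : v ∈ selectedSet D C)
      (huv : (underlying D).Adj u v) : ¬ D u v := by
    simp only [selectedSet, mem_filter_univ] at hu hv
    obtain ⟨A, hA, hvA⟩ := hv.1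
    exact hu.2 A hA (fun huA ↦ hC A hA u huA v hvA huv) v hvA
  intro u hu v hv huv
  obtain h | h := ((SimpleGraph.fromRel_adj D u v).1 huv).2
  · exact no_arc hu hv huv h
  · exact no_arc hv hu huv.symm h

lemma FracColoring.prod_exp_neg_mul {G : SimpleGraph V} (f : FracColoring G) (s : ℝ)
    (p : Finset V → Prop) [DecidablePred p] :
    ∏ A with p A, Real.exp (-(s * f.x A)) = Real.exp (-(s * f.weight p)) := by
  rw [← Real.exp_sum, sum_neg_distrib, ← mul_sum, weight, sum_filter]

lemma le_sum_randomSubsetProb_mem_selectedSet (f : FracColoring (underlying D)) {s : ℝ}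
    (hs : 0 ≤ s) (v : V) :
    (Real.exp s - 1) * Real.exp (-(s * localWeight D f)) ≤
      ∑ C, if v ∈ selectedSet D C then
        randomSubsetProb (fun A ↦ Real.exp (-(s * f.x A))) C else 0 := by
  let E : Finset (Finset V) := {A | v ∈ A}
  let F : Finset (Finset V) := {A | v ∉ A ∧ ∃ u ∈ A, D v u}
  have hEF : Disjoint E F := disjoint_left.2 fun A hE hF ↦ by simp_all [E, F]
  have mem_selectedSet (C : Finset (Finset V)) :
      v ∈ selectedSet D C ↔ ¬ Disjoint C E ∧ Disjoint C F := by
    simp [selectedSet, E, F, disjoint_left]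
  have hE : 1 ≤ f.weight (v ∈ ·) := f.cover v
  have hF : f.weight (fun A ↦ v ∉ A ∧ ∃ u ∈ A, D v u) ≤ localWeight D f - 1 :=
    (f.weight_mono fun _ h ↦ h.2).trans (le_sub_iff_add_le'.2 (f.one_add_weight_le_localWeight v))
  rw [sum_congr rfl fun C _ ↦ if_congr (mem_selectedSet C) rfl rfl,
    sum_randomSubsetProb_not_disjoint_and_disjoint _ hEF, f.prod_exp_neg_mul, f.prod_exp_neg_mul]
  calc (Real.exp s - 1) * Real.exp (-(s * localWeight D f))
      = (1 - Real.exp (-(s * 1))) * Real.exp (-(s * (localWeight D f - 1))) := by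
        simp only [sub_mul, one_mul, ← Real.exp_add]
        ring_nf
    _ ≤ _ := by
        gcongr
        simpa using mul_nonneg hs (f.weight_nonneg _)

lemma fracChrom_mul_le_exp_mul_localWeight (f : FracColoring (underlying D)) {s : ℝ} (hs : 0 < s) :
    fracChrom (underlying D) * (Real.exp s - 1) ≤ Real.exp (s * localWeight D f) := by
  have hq (A : Finset V) : Real.exp (-(s * f.x A)) ≤ 1 :=
    Real.exp_le_one_iff.2 (neg_nonpos.2 (mul_nonneg hs.le (f.nonneg A)))
  have hs' : 0 < Real.exp s - 1 := sub_pos.2 (Real.one_lt_exp_iff.2 hs)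
  have key := mul_fracChrom_le_sum (G := underlying D) (S := selectedSet D)
    (w := randomSubsetProb fun A ↦ Real.exp (-(s * f.x A)))
    (fun C ↦ mul_nonneg (prod_nonneg fun A _ ↦ sub_nonneg.2 (hq A))
      (prod_nonneg fun A _ ↦ (Real.exp_pos _).le))
    (fun C hC ↦ isIndepF_selectedSet fun A hA ↦ f.supp A fun hx ↦
      hC (mul_eq_zero_of_left (prod_eq_zero hA (by simp [hx])) _))
    (mul_pos hs' (Real.exp_pos _))
    (le_sum_randomSubsetProb_mem_selectedSet f hs.le)
  rw [sum_randomSubsetProb, Real.exp_neg, mul_right_comm, ← div_eq_mul_inv,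
    div_le_one (Real.exp_pos _)] at key
  rwa [mul_comm]

lemma fracChrom_mul_le_exp_mul_fracDirLocal (D : V → V → Prop) {s : ℝ} (hs : 0 < s) :
    fracChrom (underlying D) * (Real.exp s - 1) ≤ Real.exp (s * fracDirLocal D) := by
  obtain h | h := le_or_gt (fracChrom (underlying D) * (Real.exp s - 1)) 0
  · exact h.trans (Real.exp_pos _).le
  rw [← Real.log_le_iff_le_exp h, ← div_le_iff₀' hs]
  refine le_fracDirLocal fun f ↦ ?_
  rw [div_le_iff₀' hs, Real.log_le_iff_le_exp h]
  exact fracChrom_mul_le_exp_mul_localWeight f hs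

theorem fracChrom_lt_exp_one_mul_fracDirLocal (D : V → V → Prop) :
    fracChrom (underlying D) < Real.exp 1 * fracDirLocal D := by
  have hpos : 0 < fracDirLocal D := one_pos.trans_le one_le_fracDirLocal
  have hlt : (fracDirLocal D)⁻¹ < Real.exp (fracDirLocal D)⁻¹ - 1 :=
    lt_sub_iff_add_lt.2 (Real.add_one_lt_exp (inv_ne_zero hpos.ne'))
  have key := fracChrom_mul_le_exp_mul_fracDirLocal D (inv_pos.2 hpos)
  rw [inv_mul_cancel₀ hpos.ne', ← le_div_iff₀ ((inv_pos.2 hpos).trans hlt)] at key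
  calc fracChrom (underlying D)
      ≤ Real.exp 1 / (Real.exp (fracDirLocal D)⁻¹ - 1) := key
    _ < Real.exp 1 / (fracDirLocal D)⁻¹ :=
        div_lt_div_of_pos_left (Real.exp_pos 1) (inv_pos.2 hpos) hlt
    _ = Real.exp 1 * fracDirLocal D := div_inv_eq_mul ..

end UpperBound

section LowerBound

lemma mul_mul_one_sub_pow_le_exp_neg_one {y : ℝ} (hy : y ≤ 1) (k : ℕ) :
    k * y * (1 - y) ^ k ≤ Real.exp (-1) := by
  have hexp : k * y ≤ Real.exp (k * y - 1) := by linarith [Real.add_one_le_exp (k * y - 1)]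
  have hpow : (1 - y) ^ k ≤ Real.exp (-(k * y)) := by
    rw [← mul_neg, Real.exp_nat_mul]
    exact pow_le_pow_left₀ (sub_nonneg.2 hy) (Real.one_sub_le_exp_neg y) k
  calc k * y * (1 - y) ^ k
      ≤ Real.exp (k * y - 1) * Real.exp (-(k * y)) := by
        have := sub_nonneg.2 hy
        gcongr
    _ = Real.exp (-1) := by rw [← Real.exp_add]; ring_nf

variable {K ι : Type*}

/-- The vertices of the universal digraph with colors in `K` and out-neighborhoods of at most `ι`
colors: a color `x` together with an `ι`-indexed family of colors different from `x`. -/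
def UniversalVertex (K ι : Type*) : Type _ := Σ x : K, ι → {y : K // y ≠ x}

/-- The arcs of the universal digraph, from `(x, y)` to all vertices with color some `y i`. -/
def universalArc (p q : UniversalVertex K ι) : Prop := ∃ i, (p.2 i : K) = q.1

lemma fst_ne_of_universalArc {p q : UniversalVertex K ι} (h : universalArc p q) : p.1 ≠ q.1 := by
  obtain ⟨i, hi⟩ := h
  exact fun hpq ↦ (p.2 i).2 (hi.trans hpq.symm)

lemma not_universalArc_self (p : UniversalVertex K ι) : ¬ universalArc p p :=
  fun h ↦ fst_ne_of_universalArc h rfl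

lemma exists_universalArc [Nontrivial K] [Nonempty ι] :
    ∃ p q : UniversalVertex K ι, universalArc p q := by
  obtain ⟨x, y, hxy⟩ := exists_pair_ne K
  exact ⟨⟨x, fun _ ↦ ⟨y, hxy.symm⟩⟩, ⟨y, fun _ ↦ ⟨x, hxy⟩⟩, Classical.arbitrary ι, rfl⟩

lemma underlying_universalArc_adj {p q : UniversalVertex K ι} :
    (underlying universalArc).Adj p q ↔ universalArc p q ∨ universalArc q p := by
  refine (SimpleGraph.fromRel_adj ..).trans (and_iff_right_of_imp ?_)
  rintro h rfl
  exact not_universalArc_self p (or_self_iff.1 h)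

/-- The proper coloring of the universal digraph by first components. -/
def universalColoring (K ι : Type*) :
    (underlying (universalArc : UniversalVertex K ι → _ → Prop)).Coloring K :=
  .mk Sigma.fst fun h ↦ (underlying_universalArc_adj.1 h).elim fst_ne_of_universalArc
    fun h ↦ (fst_ne_of_universalArc h).symm

variable [Fintype K] [Fintype ι]

noncomputable instance : Fintype (UniversalVertex K ι) :=
  inferInstanceAs (Fintype (Σ x : K, ι → {y : K // y ≠ x}))

lemma card_universalVertex :
    Fintype.card (UniversalVertex K ι) =
      Fintype.card K * (Fintype.card K - 1) ^ Fintype.card ι :=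
  Fintype.card_sigma.trans (by simp)

lemma fracDirLocal_universalArc_le :
    fracDirLocal (universalArc : UniversalVertex K ι → _ → Prop) ≤ 1 + Fintype.card ι := by
  refine fracDirLocal_le_of_coloring (universalColoring K ι) fun p ↦ ?_
  calc _ ≤ #(univ.image fun i ↦ (p.2 i : K)) := by
        refine card_le_card fun x hx ↦ ?_
        obtain ⟨q, ⟨i, hi⟩, rfl⟩ := (mem_filter_univ _).1 hx
        exact mem_image.2 ⟨i, mem_univ i, hi⟩
    _ ≤ Fintype.card ι := card_image_le

lemma card_le_of_isIndepF_universalArc {A : Finset (UniversalVertex K ι)}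
    (hA : IsIndepF (underlying universalArc) A) :
    #A ≤ #(A.image Sigma.fst) * #(A.image Sigma.fst)ᶜ ^ Fintype.card ι := by
  let φ (p : UniversalVertex K ι) : K × (ι → K) := (p.1, fun i ↦ p.2 i)
  have hφ : Function.Injective φ := by
    rintro ⟨x, a⟩ ⟨y, b⟩ h
    obtain ⟨rfl, hab⟩ := Prod.ext_iff.1 h
    exact congrArg _ (funext fun i ↦ Subtype.ext (congrFun hab i))
  have hmaps : Set.MapsTo φ A
      ((A.image Sigma.fst ×ˢ Fintype.piFinset fun _ ↦ (A.image Sigma.fst)ᶜ :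
        Finset (K × (ι → K))) : Set (K × (ι → K))) := by
    intro p hp
    simp only [φ, coe_product, Set.mem_prod, mem_coe, Fintype.mem_piFinset, mem_compl]
    refine ⟨mem_image_of_mem _ hp, fun i hi ↦ ?_⟩
    obtain ⟨q, hq, hqi⟩ := mem_image.1 hi
    exact hA p hp q hq (underlying_universalArc_adj.2 (.inl ⟨i, hqi.symm⟩))
  simpa using card_le_card_of_injOn φ hmaps hφ.injOn

lemma exp_one_mul_card_le_of_isIndepF_universalArc [Nonempty K]
    {A : Finset (UniversalVertex K ι)} (hA : IsIndepF (underlying universalArc) A) :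
    Real.exp 1 * Fintype.card ι * #A ≤ (Fintype.card K : ℝ) ^ (Fintype.card ι + 1) := by
  set k := Fintype.card ι
  set n := Fintype.card K
  set X := A.image Sigma.fst
  have hn : (0 : ℝ) < n := Nat.cast_pos.2 Fintype.card_pos
  set y : ℝ := #X / n
  have hy : y ≤ 1 := div_le_one_of_le₀ (mod_cast card_le_univ X) hn.le
  have hX : (#X : ℝ) = n * y := (mul_div_cancel₀ _ hn.ne').symm
  have hXc : (#Xᶜ : ℝ) = n * (1 - y) := by
    rw [card_compl, Nat.cast_sub (card_le_univ X), hX]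
    ring
  have hA' : (#A : ℝ) ≤ #X * #Xᶜ ^ k := mod_cast card_le_of_isIndepF_universalArc hA
  calc Real.exp 1 * k * #A
      ≤ Real.exp 1 * k * (#X * #Xᶜ ^ k) := by gcongr
    _ = Real.exp 1 * (k * y * (1 - y) ^ k) * n ^ (k + 1) := by rw [hX, hXc, mul_pow]; ring
    _ ≤ Real.exp 1 * Real.exp (-1) * n ^ (k + 1) := by
        gcongr
        exact mul_mul_one_sub_pow_le_exp_neg_one hy k
    _ = n ^ (k + 1) := by rw [← Real.exp_add, add_neg_cancel, Real.exp_zero, one_mul]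

lemma le_fracChrom_universalArc [Nonempty K] :
    Real.exp 1 * Fintype.card ι * (1 - 1 / (Fintype.card K : ℝ)) ^ Fintype.card ι ≤
      fracChrom (underlying (universalArc : UniversalVertex K ι → _ → Prop)) := by
  set k := Fintype.card ι with hk
  set n := Fintype.card K with hn
  have hn₁ : 1 ≤ n := Fintype.card_pos
  have hn₀ : (0 : ℝ) < n := mod_cast hn₁
  calc Real.exp 1 * k * (1 - 1 / (n : ℝ)) ^ k
      = ∑ _p : UniversalVertex K ι, Real.exp 1 * k / (n : ℝ) ^ (k + 1) := by
        rw [sum_const, card_univ, card_universalVertex, ← hk, ← hn, nsmul_eq_mul,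
          one_sub_div hn₀.ne', div_pow]
        push_cast [hn₁]
        field_simp
        ring
    _ ≤ _ := by
        refine sum_le_fracChrom (fun _ ↦ by positivity) fun A hA ↦ ?_
        rw [sum_const, nsmul_eq_mul, ← mul_div_assoc, mul_comm, div_le_one (by positivity)]
        exact exp_one_mul_card_le_of_isIndepF_universalArc hA

lemma exp_one_mul_sq_mul_fracDirLocal_le_fracChrom_universalArc {k : ℕ} (hk : 0 < k) :
    Real.exp 1 * (k / (k + 1)) ^ 2 *
        fracDirLocal (universalArc : UniversalVertex (Fin (k * (k + 1))) (Fin k) → _ → Prop) ≤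
      fracChrom (underlying
        (universalArc : UniversalVertex (Fin (k * (k + 1))) (Fin k) → _ → Prop)) := by
  have hn : 0 < k * (k + 1) := by positivity
  have : Nonempty (Fin (k * (k + 1))) := ⟨0, hn⟩
  have bernoulli : (k / (k + 1) : ℝ) ≤ (1 - 1 / ((k * (k + 1) : ℕ) : ℝ)) ^ k := by
    have h : 1 / ((k * (k + 1) : ℕ) : ℝ) ≤ 1 := div_le_one_of_le₀ (mod_cast hn) (Nat.cast_nonneg _)
    calc (k / (k + 1) : ℝ) = 1 + k * (1 - 1 / ((k * (k + 1) : ℕ) : ℝ) - 1) := by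
          push_cast
          field_simp
          ring
      _ ≤ _ := one_add_mul_sub_le_pow (by linarith) k
  have hψ := fracDirLocal_universalArc_le (K := Fin (k * (k + 1))) (ι := Fin k)
  have hχ := le_fracChrom_universalArc (K := Fin (k * (k + 1))) (ι := Fin k)
  rw [Fintype.card_fin] at hψ hχ
  rw [Fintype.card_fin] at hχ
  calc _ ≤ Real.exp 1 * (k / (k + 1)) ^ 2 * (1 + k) := by gcongr
    _ = Real.exp 1 * k * (k / (k + 1)) := by field_simp; ring
    _ ≤ Real.exp 1 * k * (1 - 1 / ((k * (k + 1) : ℕ) : ℝ)) ^ k := by gcongr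
    _ ≤ _ := hχ

lemma exists_sub_lt_exp_one_mul_sq {ε : ℝ} (hε : 0 < ε) :
    ∃ k : ℕ, 0 < k ∧ Real.exp 1 - ε < Real.exp 1 * (k / (k + 1)) ^ 2 := by
  have hlim : Tendsto (fun k : ℕ ↦ Real.exp 1 * ((k : ℝ) / (k + 1)) ^ 2) atTop
      (𝓝 (Real.exp 1)) := by
    simpa using ((tendsto_natCast_div_add_atTop (1 : ℝ)).pow 2).const_mul (Real.exp 1)
  exact ((eventually_gt_atTop 0).and (hlim.eventually_const_lt (sub_lt_self _ hε))).exists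

theorem exists_sub_mul_fracDirLocal_lt_fracChrom {ε : ℝ} (hε : 0 < ε) :
    ∃ (n : ℕ) (D : Fin n → Fin n → Prop), (∀ v, ¬ D v v) ∧ (∃ u v, D u v) ∧
      (Real.exp 1 - ε) * fracDirLocal D < fracChrom (underlying D) := by
  obtain ⟨k, hk, hkε⟩ := exists_sub_lt_exp_one_mul_sq hε
  let D : UniversalVertex (Fin (k * (k + 1))) (Fin k) → _ → Prop := universalArc
  have hratio : (Real.exp 1 - ε) * fracDirLocal D < fracChrom (underlying D) :=
    (mul_lt_mul_of_pos_right hkε (one_pos.trans_le one_le_fracDirLocal)).trans_le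
      (exp_one_mul_sq_mul_fracDirLocal_le_fracChrom_universalArc hk)
  obtain ⟨p, q, hpq⟩ : ∃ p q, D p q := by
    have : Nontrivial (Fin (k * (k + 1))) := Fin.nontrivial_iff_two_le.2 (by nlinarith)
    have : Nonempty (Fin k) := ⟨0, hk⟩
    exact exists_universalArc
  let e := (Fintype.equivFin (UniversalVertex (Fin (k * (k + 1))) (Fin k))).symm
  refine ⟨_, e ⁻¹'o D, fun v ↦ not_universalArc_self (e v), ⟨e.symm p, e.symm q, ?_⟩, ?_⟩
  · simpa [Order.Preimage] using hpq
  · rwa [fracDirLocal_congr (RelIso.preimage e D),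
      fracChrom_congr (underlyingIso (RelIso.preimage e D))]

end LowerBound

theorem stmt9_general :
    (∀ {V : Type*} [Fintype V] (D : V → V → Prop),
      fracChrom (underlying D) < Real.exp 1 * fracDirLocal D) ∧
    (∀ ε : ℝ, 0 < ε → ∃ (n : ℕ) (D : Fin n → Fin n → Prop),
      (∀ v, ¬ D v v) ∧ (∃ u v, D u v) ∧
      (Real.exp 1 - ε) * fracDirLocal D < fracChrom (underlying D)) :=
  ⟨fracChrom_lt_exp_one_mul_fracDirLocal, fun _ ↦ exists_sub_mul_fracDirLocal_lt_fracChrom⟩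

/-- The supremum of `χ*(D)/ψ_d*(D)` over finite loopless digraphs `D` with at least one arc
equals `e`: every such digraph satisfies `χ*(D) < e·ψ_d*(D)`, and for each `ε > 0` some such
digraph satisfies `χ*(D) > (e-ε)·ψ_d*(D)`. -/
theorem stmt9 :
    (∀ (n : ℕ) (D : Fin n → Fin n → Prop), (∀ v, ¬ D v v) → (∃ u v, D u v) →
      fracChrom (underlying D) < Real.exp 1 * fracDirLocal D) ∧
    (∀ ε : ℝ, 0 < ε → ∃ (n : ℕ) (D : Fin n → Fin n → Prop),
      (∀ v, ¬ D v v) ∧ (∃ u v, D u v) ∧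
      (Real.exp 1 - ε) * fracDirLocal D < fracChrom (underlying D)) :=
  stmt9_general.imp_left fun h _ D _ _ ↦ h D
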